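/- Assume the abc-conjecture. Let F(U,V) ∈ ℤ[U,V] be a nonzero homogeneous polynomial of degree d without any repeated irreducible factors. Then for every ε > 0 there exists a constant c > 0, depending only on F and ε, such that for all coprime integers u, v with F(u,v) ≠ 0, one has rad(F(u,v)) ≥ c · max(|u|,|v|)^{d−2−ε}. -/

import Mathlib

/-- The radical of a natural number: the product of its distinct prime factors. -/
def radNat (m : ℕ) : ℕ := ∏ p ∈ m.primeFactors, p

/-- The abc-conjecture. -/
def ABCConjecture : Prop :=
  ∀ ε : ℝ, 0 < ε → ∃ K : ℝ, 0 < K ∧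
    ∀ a b c : ℕ, 0 < a → 0 < b → 0 < c → Nat.Coprime a b → a + b = c →
      (c : ℝ) ≤ K * (radNat (a * b * c) : ℝ) ^ ((1 : ℝ) + ε)

/-!
The argument runs Belyi's theorem one polynomial at a time. For `f ∈ ℚ[X]` with `r` distinct
complex roots, compare the height `H(x)` of a rational number `x` with the product of the primes
at which `x` meets `∞` or a root of `f`; the claim is that this product is `≫ H(x) ^ (r - 1 - ε)`.
For `f = X (X - 1)` this is the abc-conjecture. The claim for `h` implies the claim for every
divisor `f` of a power of `h`, because the part `q` of `h` prime to `f` contributes at most the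
size `O(H(x) ^ deg q)` of its value. The claim for `g` implies the claim for `g ∘ φ` whenever all
critical values of `φ` are roots of `g`: by Riemann–Hurwitz, here the divisibility
`φ' · rad(ψ) ∣ ψ` for `ψ = rad(g) ∘ φ`, the loss in the number of roots matches
`H(φ x) ≍ H(x) ^ deg φ`.

Taking for `φ` an irreducible factor of `f` of degree at least two trades that factor for critical
values of lower degree, so one reaches an `f` with rational roots only. If there are three roots
`r < s < t`, the map `φ = (X - r) ^ a (X - t) ^ b`, with `a, b` chosen such that `s` is its
remaining critical point, sends `r` and `t` to the same value and lowers their number.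

A squarefree form of degree `d` dehomogenizes to a squarefree polynomial of degree `d`, or of
degree `d - 1` if `V` divides the form. In the former case the primes dividing the denominator `v`
need not divide the value of the form, which costs one factor `H(u / v) = max(|u|, |v|)`.
-/

open Polynomial UniqueFactorizationMonoid Height
open EuclideanDomain (divRadical divRadical_ne_zero radical_mul_divRadical)

lemma radNat_eq_radical (m : ℕ) : radNat m = radical m :=
  Nat.radical_eq_prod_primeFactors.symm

lemma radical_le_mul_radical {m C n : ℕ} (hC : C ≠ 0) (hn : n ≠ 0)
    (h : ∀ p : ℕ, p.Prime → p ∣ m → p ∣ C * n) : radical m ≤ C * radical n := by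
  have hsub : m.primeFactors ⊆ (C * n).primeFactors := fun p hp ↦
    Nat.mem_primeFactors_of_ne_zero (mul_ne_zero hC hn) |>.mpr
      ⟨Nat.prime_of_mem_primeFactors hp, h p (Nat.prime_of_mem_primeFactors hp)
        (Nat.dvd_of_mem_primeFactors hp)⟩
  have hdvd : radical m ∣ C * radical n := by
    have : (C * n).primeFactors = (C * radical n).primeFactors := by
      rw [Nat.primeFactors_mul hC hn, Nat.primeFactors_mul hC radical_ne_zero,
        Nat.primeFactors_radical]
    exact (Nat.radical_dvd_iff (mul_ne_zero hC radical_ne_zero)).mpr (this ▸ hsub)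
  exact Nat.le_of_dvd (mul_pos hC.bot_lt (Nat.radical_pos n)) hdvd

section Height

variable {K : Type*} [Field K] [AdmissibleAbsValues K]

lemma exists_mulHeight₁_eval_le (q : K[X]) :
    ∃ C > 0, ∀ x, mulHeight₁ (q.eval x) ≤ C * mulHeight₁ x ^ q.natDegree := by
  obtain ⟨C, hC, hle⟩ := mulHeight_eval_le' q.isHomogeneous_toTupleMvPolynomial
  refine ⟨C, hC, fun x ↦ ?_⟩
  rw [q.eval_eq_div_eval_toTupleMvPolynomial, mulHeight₁_div_eq_mulHeight, mulHeight₁_eq_mulHeight]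
  convert hle ![x, 1] using 2
  ext i
  fin_cases i <;> rfl

lemma exists_mulHeight₁_pow_le_eval {φ : K[X]} (hφ : 0 < φ.natDegree) :
    ∃ C > 0, ∀ x, mulHeight₁ x ^ φ.natDegree ≤ C * mulHeight₁ (φ.eval x) := by
  -- `X ^ (2n - 1) = φ * A + B` with `A`, `B` of degree less than `n` recovers `x` from `φ x`.
  obtain ⟨m, hm⟩ : ∃ m, φ.natDegree = m + 1 := ⟨_, (Nat.succ_pred_eq_of_pos hφ).symm⟩
  set A := X ^ (m + φ.natDegree) / φ
  set B := X ^ (m + φ.natDegree) % φ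
  have hA : A.natDegree ≤ m := by
    have hφ0 : φ ≠ 0 := ne_zero_of_natDegree_gt hφ
    rw [show A = _ from div_def]
    refine (natDegree_C_mul_le _ _).trans ?_
    rw [natDegree_divByMonic _ (monic_mul_leadingCoeff_inv hφ0), natDegree_X_pow,
      natDegree_mul_leadingCoeff_inv _ hφ0, Nat.add_sub_cancel]
  have hB : B.natDegree ≤ m := by
    have : B.natDegree < φ.natDegree := natDegree_mod_lt _ hφ.ne'
    omega
  let q : Fin 2 × Fin 2 → MvPolynomial (Fin 2) K :=
    ![![A.homogenize m, B.homogenize m], ![0, .X 1 ^ m]].uncurry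
  have hq a : (q a).IsHomogeneous m := by
    fin_cases a
    exacts [isHomogeneous_homogenize A, isHomogeneous_homogenize B,
      MvPolynomial.isHomogeneous_zero .., MvPolynomial.isHomogeneous_X_pow ..]
  obtain ⟨C, hC, hge⟩ := mulHeight_eval_ge' (N := φ.natDegree) hq
  refine ⟨C⁻¹, inv_pos.mpr hC, fun x ↦ (le_inv_mul_iff₀ hC).mpr ?_⟩
  rw [φ.eval_eq_div_eval_toTupleMvPolynomial, mulHeight₁_div_eq_mulHeight, mulHeight₁_eq_mulHeight]
  have heval : (fun j ↦ MvPolynomial.eval ![x, 1] (φ.toTupleMvPolynomial j)) =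
      ![MvPolynomial.eval ![x, 1] (φ.toTupleMvPolynomial 0),
        MvPolynomial.eval ![x, 1] (φ.toTupleMvPolynomial 1)] := by
    ext i
    fin_cases i <;> rfl
  refine heval ▸ hge φ.toTupleMvPolynomial fun k ↦ ?_
  have hdiv : A.eval x * φ.eval x + B.eval x = x ^ (m + φ.natDegree) := by
    rw [← eval_mul, ← eval_add, mul_comm, EuclideanDomain.div_add_mod, eval_pow, eval_X]
  fin_cases k
  · simpa [q, toTupleMvPolynomial, eval_homogenize, hA, hB] using hdiv
  · simp [q, toTupleMvPolynomial]

end Height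

section RiemannHurwitz

variable {K : Type*} [Field K]

lemma comp_ne_zero_of_natDegree_pos {g φ : K[X]} (hg : g ≠ 0) (hφ : 0 < φ.natDegree) :
    g.comp φ ≠ 0 := fun h ↦ (comp_eq_zero_iff.mp h).elim hg fun h ↦ hφ.ne' (h.2 ▸ natDegree_C _)

variable [CharZero K]

lemma pow_succ_dvd_of_pow_dvd_derivative {p f : K[X]} (hp : Irreducible p) (hpf : p ∣ f) {e : ℕ}
    (h : p ^ e ∣ derivative f) : p ^ (e + 1) ∣ f := by
  induction e with
  | zero => simpa using hpf
  | succ e ih =>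
    obtain ⟨r, rfl⟩ := ih ((pow_dvd_pow p e.le_succ).trans h)
    have hder : derivative (p ^ (e + 1) * r) =
        p ^ e * (C ((e : K) + 1) * derivative p * r + p * derivative r) := by
      rw [derivative_mul, derivative_pow_succ]
      ring
    rw [hder, pow_succ, mul_dvd_mul_iff_left (pow_ne_zero e hp.ne_zero),
      dvd_add_left (dvd_mul_right p _)] at h
    have hunit : ¬ p ∣ C ((e : K) + 1) := fun hd ↦
      hp.not_isUnit (isUnit_of_dvd_unit hd (isUnit_C.mpr (Nat.cast_add_one_ne_zero e).isUnit))
    have hsep : ¬ p ∣ derivative p := fun hd ↦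
      hp.not_isUnit (hp.separable.isUnit_of_dvd' dvd_rfl hd)
    have hr : p ∣ r := (hp.prime.dvd_or_dvd h).resolve_left fun h' ↦
      (hp.prime.dvd_or_dvd h').elim hunit hsep
    exact pow_succ p (e + 1) ▸ mul_dvd_mul_left _ hr

variable [DecidableEq K]

lemma dvd_divRadical_of_dvd_derivative {a f : K[X]} {j : ℕ} (hf : f ≠ 0) (haf : a ∣ f ^ j)
    (ha : a ∣ derivative f) : a ∣ divRadical f := by
  induction a using induction_on_coprime with
  | h0 => exact absurd (zero_dvd_iff.mp haf) (pow_ne_zero j hf)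
  | h1 hunit => exact hunit.dvd
  | @hpr p i hp =>
    obtain _ | i := i
    · simp
    have hpf : p ∣ f := hp.dvd_of_dvd_pow ((dvd_pow_self p i.succ_ne_zero).trans haf)
    obtain ⟨s, hs⟩ : p ∣ radical f := (dvd_radical_iff_of_irreducible hp.irreducible hf).mpr hpf
    have hps : ¬ p ∣ s := fun h ↦ hp.not_isUnit <|
      squarefree_radical (a := f) p (hs ▸ mul_dvd_mul_left p h)
    have hdvd := pow_succ_dvd_of_pow_dvd_derivative hp.irreducible hpf ha
    rw [← radical_mul_divRadical (a := f), hs, pow_succ', mul_assoc,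
      mul_dvd_mul_iff_left hp.ne_zero] at hdvd
    exact hp.pow_dvd_of_dvd_mul_left _ hps hdvd
  | hcp hxy hx hy =>
    exact hxy.mul_dvd
      (hx (dvd_of_mul_right_dvd haf) (dvd_of_mul_right_dvd ha))
      (hy (dvd_of_mul_left_dvd haf) (dvd_of_mul_left_dvd ha))

lemma natDegree_radical_comp_add_le {g φ : K[X]} {i : ℕ} (hg : g ≠ 0) (hφ : 0 < φ.natDegree)
    (hcrit : derivative φ ∣ g.comp φ ^ i) :
    (radical (g.comp φ)).natDegree + φ.natDegree ≤
      φ.natDegree * (radical g).natDegree + 1 := by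
  set ψ := (radical g).comp φ with hψ
  have hψ0 : ψ ≠ 0 := comp_ne_zero_of_natDegree_pos radical_ne_zero hφ
  obtain ⟨m, hm⟩ := exists_dvd_radical_self_pow hg
  have hgψ : g.comp φ ∣ ψ ^ m := by simpa [hψ] using map_dvd (compRingHom φ) hm
  have hrad : (radical (g.comp φ)).natDegree ≤ (radical ψ).natDegree := by
    refine natDegree_le_of_dvd ?_ radical_ne_zero
    exact (dvd_radical_iff isRadical_radical hψ0).mpr <|
      (exists_dvd_pow_iff_radical_dvd (comp_ne_zero_of_natDegree_pos hg hφ)).mp ⟨m, hgψ⟩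
  have hdiv : derivative φ ∣ divRadical ψ := by
    refine dvd_divRadical_of_dvd_derivative (j := m * i) hψ0 ?_ ?_
    · exact pow_mul ψ m i ▸ hcrit.trans (pow_dvd_pow_of_dvd hgψ i)
    · rw [hψ, derivative_comp]
      exact dvd_mul_right _ _
  have hdeg : φ.natDegree - 1 ≤ (divRadical ψ).natDegree := by
    rw [← natDegree_derivative]
    exact natDegree_le_of_dvd hdiv (divRadical_ne_zero hψ0)
  have hsum : (radical ψ).natDegree + (divRadical ψ).natDegree =
      φ.natDegree * (radical g).natDegree := by
    rw [← natDegree_mul radical_ne_zero (divRadical_ne_zero hψ0), radical_mul_divRadical, hψ,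
      natDegree_comp, mul_comm]
  omega

end RiemannHurwitz

lemma exists_dvd_of_prime_dvd_den_eval (q : ℚ[X]) : ∃ C : ℕ, C ≠ 0 ∧
    ∀ (x : ℚ) (p : ℕ), p.Prime → p ∣ (q.eval x).den → p ∣ C * x.den := by
  induction q using Polynomial.induction_on with
  | C a => exact ⟨a.den, a.den_nz, fun x p _ h ↦ by simpa using h.mul_right x.den⟩
  | add q r hq hr =>
    obtain ⟨C, hC, hq⟩ := hq
    obtain ⟨D, hD, hr⟩ := hr
    refine ⟨C * D, mul_ne_zero hC hD, fun x p hp h ↦ ?_⟩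
    rw [eval_add] at h
    rcases hp.dvd_mul.mp (h.trans (Rat.add_den_dvd _ _)) with h | h
    · exact (hq x p hp h).trans ⟨D, by ring⟩
    · exact (hr x p hp h).trans ⟨C, by ring⟩
  | monomial n a ih =>
    obtain ⟨C, hC, hq⟩ := ih
    refine ⟨C, hC, fun x p hp h ↦ ?_⟩
    rw [pow_succ, ← mul_assoc, eval_mul, eval_X] at h
    rcases hp.dvd_mul.mp (h.trans (Rat.mul_den_dvd _ _)) with h | h
    · exact hq x p hp h
    · exact h.mul_left C

lemma dvd_natAbs_num_mul_of_not_dvd_den {p : ℕ} (hp : p.Prime) {x y : ℚ} (hx : p ∣ x.num.natAbs)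
    (hy : ¬ p ∣ y.den) : p ∣ (x * y).num.natAbs := by
  have hxd : ¬ p ∣ x.den := fun h ↦ hp.not_dvd_one (x.reduced ▸ Nat.dvd_gcd hx h)
  have heq := congrArg Int.natAbs (Rat.mul_num_den' x y)
  simp only [Int.natAbs_mul, Int.natAbs_natCast] at heq
  have hdvd : p ∣ (x * y).num.natAbs * x.den * y.den :=
    heq ▸ (hx.mul_right _).mul_right _
  simpa only [hp.dvd_mul, hxd, hy, or_false] using hdvd

lemma exists_dvd_of_prime_dvd_num_eval {f g : ℚ[X]} {k : ℕ} (hfg : f ∣ g ^ k) : ∃ C : ℕ, C ≠ 0 ∧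
    ∀ (x : ℚ) (p : ℕ), p.Prime → p ∣ (f.eval x).num.natAbs →
      p ∣ C * (x.den * (g.eval x).num.natAbs) := by
  obtain ⟨q, hq⟩ := hfg
  obtain ⟨C, hC, hden⟩ := exists_dvd_of_prime_dvd_den_eval q
  refine ⟨C, hC, fun x p hp h ↦ ?_⟩
  rw [← mul_assoc]
  by_cases hqx : p ∣ (q.eval x).den
  · exact (hden x p hp hqx).mul_right _
  · have hpow := dvd_natAbs_num_mul_of_not_dvd_den hp h hqx
    rw [← eval_mul, ← hq, eval_pow, Rat.num_pow, Int.natAbs_pow] at hpow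
    exact (hp.dvd_of_dvd_pow hpow).mul_left _

/-- The product of the primes at which `x` meets `∞` or a root of `f`. -/
noncomputable def supportRad (f : ℚ[X]) (x : ℚ) : ℕ := radical (x.den * (f.eval x).num.natAbs)

/-- The estimate `supportRad f x ≫ H(x) ^ (r - 1 - ε)` over all rational `x` with `f x ≠ 0`, where
`H` is the height and `r`, the number of distinct complex roots of `f`, is encoded as the degree of
the radical of `f`. -/
def RadBound (f : ℚ[X]) : Prop :=
  ∀ ε : ℝ, 0 < ε → ∃ c > 0, ∀ x : ℚ, f.eval x ≠ 0 →
    c * mulHeight₁ x ^ (((radical f).natDegree : ℝ) - 1 - ε) ≤ supportRad f x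

lemma one_le_supportRad (f : ℚ[X]) (x : ℚ) : (1 : ℝ) ≤ supportRad f x := by
  exact_mod_cast Nat.radical_pos _

lemma supportRad_le_mul {f g : ℚ[X]} {x y : ℚ} {C : ℕ} (hC : C ≠ 0) (hg : g.eval y ≠ 0)
    (hden : ∀ p : ℕ, p.Prime → p ∣ x.den → p ∣ C * (y.den * (g.eval y).num.natAbs))
    (hnum : ∀ p : ℕ, p.Prime → p ∣ (f.eval x).num.natAbs →
      p ∣ C * (y.den * (g.eval y).num.natAbs)) :
    supportRad f x ≤ C * supportRad g y := by
  refine radical_le_mul_radical hC (mul_ne_zero y.den_nz (by simpa using hg)) fun p hp h ↦ ?_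
  exact (hp.dvd_mul.mp h).elim (hden p hp) (hnum p hp)

lemma exists_supportRad_eval_le (φ : ℚ[X]) : ∃ C : ℕ, C ≠ 0 ∧ ∀ (g : ℚ[X]) (x : ℚ),
    (g.comp φ).eval x ≠ 0 → supportRad g (φ.eval x) ≤ C * supportRad (g.comp φ) x := by
  obtain ⟨C, hC, hden⟩ := exists_dvd_of_prime_dvd_den_eval φ
  refine ⟨C, hC, fun g x hx ↦ supportRad_le_mul hC hx (fun p hp h ↦ ?_) fun p _ h ↦ ?_⟩
  · exact mul_assoc C _ _ ▸ (hden x p hp h).mul_right _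
  · rw [← eval_comp] at h
    exact (h.mul_left _).mul_left _

lemma exists_supportRad_le_of_dvd_pow {f q h : ℚ[X]} {m : ℕ} (hdvd : h ∣ (f * q) ^ m) :
    ∃ C : ℕ, C ≠ 0 ∧ ∀ x : ℚ, (f * q).eval x ≠ 0 →
      supportRad h x ≤ C * (q.eval x).num.natAbs * supportRad f x := by
  obtain ⟨C, hC, hnum⟩ := exists_dvd_of_prime_dvd_num_eval hdvd
  refine ⟨C, hC, fun x hx ↦ ?_⟩
  rw [eval_mul, mul_ne_zero_iff] at hx
  have hq : (q.eval x).num.natAbs ≠ 0 := by simpa using hx.2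
  refine supportRad_le_mul (mul_ne_zero hC hq) hx.1
    (fun p _ h ↦ (h.mul_right _).mul_left _) fun p hp h ↦ (hnum x p hp h).trans ?_
  have hmul : (f.eval x * q.eval x).num.natAbs ∣
      (f.eval x).num.natAbs * (q.eval x).num.natAbs := by
    rw [← Int.natAbs_mul, Int.natAbs_dvd_natAbs, Rat.mul_num]
    exact Int.ediv_dvd_of_dvd (Int.natCast_dvd.mpr (Nat.gcd_dvd_left _ _))
  rw [eval_mul, mul_assoc, mul_left_comm (q.eval x).num.natAbs, mul_comm (q.eval x).num.natAbs]
  exact mul_dvd_mul_left C (mul_dvd_mul_left x.den hmul)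

lemma abs_num_le_mulHeight₁ (x : ℚ) : (x.num.natAbs : ℝ) ≤ mulHeight₁ x := by
  rw [Rat.mulHeight₁_eq_max]
  exact_mod_cast le_max_left _ _

lemma rpow_mulHeight₁_le_supportRad (f : ℚ[X]) (x : ℚ) {e : ℝ} (he : e ≤ 0) :
    mulHeight₁ x ^ e ≤ supportRad f x :=
  (Real.rpow_le_one_of_one_le_of_nonpos (one_le_mulHeight₁ x) he).trans (one_le_supportRad f x)

lemma exists_radical_eq_radical_mul {M : Type*} [CommMonoidWithZero M] [NormalizationMonoid M]
    [UniqueFactorizationMonoid M] {f h : M} {k : ℕ} (hh : h ≠ 0) (hfh : f ∣ h ^ k) :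
    ∃ q m, radical h = radical f * q ∧ h ∣ (f * q) ^ m := by
  have hf : f ≠ 0 := ne_zero_of_dvd_ne_zero (pow_ne_zero k hh) hfh
  obtain ⟨q, hq⟩ : radical f ∣ radical h := (dvd_radical_iff isRadical_radical hh).mpr <|
    (exists_dvd_pow_iff_radical_dvd hf).mp ⟨k, hfh⟩
  obtain ⟨m, hm⟩ := exists_dvd_radical_self_pow hh
  exact ⟨q, m, hq, hm.trans (pow_dvd_pow_of_dvd (hq ▸ mul_dvd_mul_right radical_dvd_self q) m)⟩

lemma exists_pos_mul_le_of_finite {α : Type*} {S : Set α} (hS : S.Finite) (F : α → ℝ) :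
    ∃ c > 0, ∀ x ∈ S, c * F x ≤ 1 := by
  obtain ⟨B, hB⟩ := (hS.image F).bddAbove
  refine ⟨(max B 1)⁻¹, by positivity, fun x hx ↦ (inv_mul_le_iff₀ (by positivity)).mpr ?_⟩
  rw [mul_one]
  exact (hB (Set.mem_image_of_mem F hx)).trans (le_max_left B 1)

namespace RadBound

lemma of_natDegree_radical_le_one {f : ℚ[X]} (hf : (radical f).natDegree ≤ 1) : RadBound f := by
  intro ε hε
  have : ((radical f).natDegree : ℝ) ≤ 1 := by exact_mod_cast hf
  exact ⟨1, one_pos, fun x _ ↦ by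
    simpa using rpow_mulHeight₁_le_supportRad f x (by linarith)⟩

lemma comp {g φ : ℚ[X]} {i : ℕ} (H : RadBound g) (hg : g ≠ 0) (hφ : 0 < φ.natDegree)
    (hcrit : derivative φ ∣ g.comp φ ^ i) : RadBound (g.comp φ) := by
  intro ε hε
  set n := φ.natDegree
  have hn : (0 : ℝ) < n := Nat.cast_pos.mpr hφ
  obtain ⟨e, he⟩ : ∃ e : ℝ, e = (radical g).natDegree - 1 - ε / n := ⟨_, rfl⟩
  have hRH : ((radical (g.comp φ)).natDegree : ℝ) - 1 - ε ≤ n * e := by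
    have : ((radical (g.comp φ)).natDegree : ℝ) + n ≤ n * (radical g).natDegree + 1 := by
      exact_mod_cast natDegree_radical_comp_add_le hg hφ hcrit
    rw [he, mul_sub, mul_div_cancel₀ _ hn.ne']
    linarith
  rcases le_or_gt e 0 with he0 | he0
  · have hneg := hRH.trans (mul_nonpos_of_nonneg_of_nonpos hn.le he0)
    exact ⟨1, one_pos, fun x _ ↦ by simpa using rpow_mulHeight₁_le_supportRad _ x hneg⟩
  obtain ⟨c, hc, hbound⟩ := H (ε / n) (div_pos hε hn)
  obtain ⟨B, hB, hheight⟩ := exists_mulHeight₁_pow_le_eval hφ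
  obtain ⟨C, hC, hsupp⟩ := exists_supportRad_eval_le φ
  have : (0 : ℝ) < C := Nat.cast_pos.mpr hC.bot_lt
  refine ⟨c / (B ^ e * C), by positivity, fun x hx ↦ ?_⟩
  have hpow : mulHeight₁ x ^ (((radical (g.comp φ)).natDegree : ℝ) - 1 - ε) ≤
      B ^ e * mulHeight₁ (φ.eval x) ^ e := by
    calc _ ≤ mulHeight₁ x ^ (n * e) :=
          Real.rpow_le_rpow_of_exponent_le (one_le_mulHeight₁ x) hRH
      _ = (mulHeight₁ x ^ n) ^ e := by rw [Real.rpow_mul (by positivity), Real.rpow_natCast]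
      _ ≤ (B * mulHeight₁ (φ.eval x)) ^ e := by
          gcongr
          exact hheight x
      _ = _ := Real.mul_rpow hB.le (by positivity)
  have hle : c * mulHeight₁ (φ.eval x) ^ e ≤ C * supportRad (g.comp φ) x := by
    refine (he ▸ hbound _ (by rwa [← eval_comp])).trans ?_
    exact_mod_cast hsupp g x hx
  rw [div_mul_eq_mul_div, div_le_iff₀ (by positivity)]
  calc _ ≤ B ^ e * (c * mulHeight₁ (φ.eval x) ^ e) := by
        rw [mul_left_comm]
        exact mul_le_mul_of_nonneg_left hpow hc.le
    _ ≤ B ^ e * (C * supportRad (g.comp φ) x) := by gcongr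
    _ = _ := by ring

lemma of_forall_eval_ne_zero {f h : ℚ[X]} (hh : h ≠ 0)
    (H : ∀ ε : ℝ, 0 < ε → ∃ c > 0, ∀ x : ℚ, h.eval x ≠ 0 →
      c * mulHeight₁ x ^ (((radical f).natDegree : ℝ) - 1 - ε) ≤ supportRad f x) :
    RadBound f := by
  intro ε hε
  obtain ⟨c₁, hc₁, hbound⟩ := H ε hε
  obtain ⟨c₂, hc₂, hroots⟩ := exists_pos_mul_le_of_finite (finite_setOfPred_isRoot hh)
    fun x ↦ mulHeight₁ x ^ (((radical f).natDegree : ℝ) - 1 - ε)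
  refine ⟨min c₁ c₂, lt_min hc₁ hc₂, fun x _ ↦ ?_⟩
  by_cases hx : h.eval x = 0
  · refine le_trans ?_ ((hroots x hx).trans (one_le_supportRad f x))
    gcongr
    exact min_le_right _ _
  · refine le_trans ?_ (hbound x hx)
    gcongr
    exact min_le_left _ _

lemma of_dvd_pow {f h : ℚ[X]} {k : ℕ} (H : RadBound h) (hh : h ≠ 0) (hfh : f ∣ h ^ k) :
    RadBound f := by
  obtain ⟨q, m, hq, hm⟩ := exists_radical_eq_radical_mul hh hfh
  obtain ⟨C, hC, hsupp⟩ := exists_supportRad_le_of_dvd_pow hm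
  obtain ⟨B, hB, hheight⟩ := exists_mulHeight₁_eval_le q
  have : (0 : ℝ) < C := Nat.cast_pos.mpr hC.bot_lt
  refine of_forall_eval_ne_zero hh fun ε hε ↦ ?_
  obtain ⟨c, hc, hbound⟩ := H ε hε
  refine ⟨c / (C * B), by positivity, fun x hx ↦ ?_⟩
  have hfx : f.eval x ≠ 0 := fun h0 ↦ pow_ne_zero k hx <|
    eval_pow (p := h) k ▸ eval_eq_zero_of_dvd_of_eval_eq_zero hfh h0
  have hqx : q.eval x ≠ 0 := fun h0 ↦ hx <| eval_eq_zero_of_dvd_of_eval_eq_zero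
    ((Dvd.intro_left _ hq.symm).trans radical_dvd_self) h0
  have hexp : ((radical h).natDegree : ℝ) - 1 - ε =
      ((radical f).natDegree - 1 - ε) + q.natDegree := by
    rw [hq, natDegree_mul radical_ne_zero (right_ne_zero_of_mul (hq ▸ radical_ne_zero))]
    push_cast
    ring
  have hle : (supportRad h x : ℝ) ≤ C * (q.eval x).num.natAbs * supportRad f x := by
    exact_mod_cast hsupp x (by simpa using ⟨hfx, hqx⟩)
  refine le_of_mul_le_mul_right ?_ (by positivity : 0 < C * B * mulHeight₁ x ^ q.natDegree)
  calc _ = c * mulHeight₁ x ^ (((radical h).natDegree : ℝ) - 1 - ε) := by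
        rw [hexp, Real.rpow_add (by positivity), Real.rpow_natCast]
        field_simp
    _ ≤ C * (q.eval x).num.natAbs * supportRad f x := (hbound x hx).trans hle
    _ ≤ C * (B * mulHeight₁ x ^ q.natDegree) * supportRad f x := by
        gcongr
        exact (abs_num_le_mulHeight₁ _).trans (hheight x)
    _ = _ := by ring

end RadBound

lemma ABCConjecture.exists_max_natAbs_le (habc : ABCConjecture) {ε : ℝ} (hε : 0 < ε) :
    ∃ K > 0, ∀ u v : ℤ, IsCoprime u v → u ≠ 0 → v ≠ 0 → u ≠ v →
      (max u.natAbs v.natAbs : ℝ) ≤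
        K * ((radical (u.natAbs * v.natAbs * (u - v).natAbs) : ℕ) : ℝ) ^ (1 + ε) := by
  obtain ⟨K, hK, hbound⟩ := habc ε hε
  refine ⟨K, hK, fun u v huv hu hv hne ↦ ?_⟩
  have of_add_eq {a b c : ℕ} (ha : 0 < a) (hb : 0 < b) (hab : a.Coprime b) (hc : a + b = c)
      (hprod : a * b * c = u.natAbs * v.natAbs * (u - v).natAbs)
      (hmax : max u.natAbs v.natAbs ≤ c) : (max u.natAbs v.natAbs : ℝ) ≤
        K * ((radical (u.natAbs * v.natAbs * (u - v).natAbs) : ℕ) : ℝ) ^ (1 + ε) := by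
    rw [← hprod, ← radNat_eq_radical]
    exact le_trans (mod_cast hmax) (hbound a b c ha hb (by lia) hab hc)
  have hcop : u.natAbs.Coprime v.natAbs := Int.isCoprime_iff_nat_coprime.mp huv
  have hcop_left : u.natAbs.Coprime (u - v).natAbs :=
    Int.isCoprime_iff_nat_coprime.mp (.of_add_mul_left_right (z := -1) <| by
      rw [show u - v + u * -1 = -v by ring]
      exact huv.neg_right)
  have hcop_right : v.natAbs.Coprime (u - v).natAbs :=
    Int.isCoprime_iff_nat_coprime.mp (.of_add_mul_left_right (z := 1) <| by
      simpa using huv.symm)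
  obtain h | h | h : u.natAbs + v.natAbs = (u - v).natAbs ∨
      u.natAbs + (u - v).natAbs = v.natAbs ∨ v.natAbs + (u - v).natAbs = u.natAbs := by lia
  · exact of_add_eq (by lia) (by lia) hcop h rfl (by lia)
  · exact of_add_eq (by lia) (by lia) hcop_left h (by ring) (by lia)
  · exact of_add_eq (by lia) (by lia) hcop_right h (by ring) (by lia)

lemma radical_num_mul_den_mul_sub_le_supportRad {x : ℚ} (hx : (X * (X - 1) : ℚ[X]).eval x ≠ 0) :
    radical (x.num.natAbs * x.den * (x.num - x.den).natAbs) ≤ supportRad (X * (X - 1)) x := by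
  rw [← one_mul (supportRad _ _)]
  refine radical_le_mul_radical one_ne_zero (mul_ne_zero x.den_nz (by simpa using hx))
    fun p hp h ↦ ?_
  set y := (X * (X - 1) : ℚ[X]).eval x with hy
  have heq : y.num.natAbs * x.den ^ 2 =
      x.num.natAbs * (x.num - x.den).natAbs * y.den := by
    have hQ : (y.num : ℚ) * x.den ^ 2 = x.num * (x.num - x.den) * y.den := by
      rw [← Rat.mul_den_eq_num y, ← Rat.mul_den_eq_num x, hy]
      simp only [eval_mul, eval_X, eval_sub, eval_one]
      ring
    have hZ : y.num * (x.den : ℤ) ^ 2 = x.num * (x.num - x.den) * y.den := by exact_mod_cast hQ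
    simpa [Int.natAbs_mul, Int.natAbs_pow] using congrArg Int.natAbs hZ
  by_cases hpx : p ∣ x.den
  · exact (hpx.mul_right _).mul_left _
  have hpy : p ∣ y.num.natAbs * x.den ^ 2 := by
    rw [mul_right_comm] at h
    exact heq ▸ ((hp.dvd_mul.mp h).resolve_right hpx).mul_right _
  have hpnum := (hp.dvd_mul.mp hpy).resolve_right fun h ↦ hpx (hp.dvd_of_dvd_pow h)
  exact (hpnum.mul_left _).mul_left _

lemma radBound_X_mul_X_sub_one (habc : ABCConjecture) : RadBound (X * (X - 1)) := by
  intro ε hε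
  have hdeg : ((radical (X * (X - 1) : ℚ[X])).natDegree : ℝ) ≤ 2 := by
    refine Nat.cast_le_ofNat.mpr (natDegree_radical_le.trans ?_)
    compute_degree
  obtain ⟨K, hK, hbound⟩ := habc.exists_max_natAbs_le hε
  refine ⟨(K ^ (1 + ε)⁻¹)⁻¹, by positivity, fun x hx ↦ (inv_mul_le_iff₀ (by positivity)).mpr ?_⟩
  have hheight : mulHeight₁ x ≤ K * (supportRad (X * (X - 1)) x : ℝ) ^ (1 + ε) := by
    have hx' : x ≠ 0 ∧ x - 1 ≠ 0 := by simpa using hx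
    have hne : x.num ≠ x.den := fun h ↦ hx'.2 <| by
      rw [← x.num_div_den, h, Int.cast_natCast, div_self (Nat.cast_ne_zero.mpr x.den_nz), sub_self]
    have hle := hbound x.num x.den (Rat.isCoprime_num_den x) (Rat.num_ne_zero.mpr hx'.1)
      (Nat.cast_ne_zero.mpr x.den_nz) hne
    rw [Int.natAbs_natCast] at hle
    rw [Rat.mulHeight₁_eq_max, Nat.cast_max]
    refine hle.trans ?_
    gcongr
    exact radical_num_mul_den_mul_sub_le_supportRad hx
  calc mulHeight₁ x ^ (((radical (X * (X - 1) : ℚ[X])).natDegree : ℝ) - 1 - ε)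
      ≤ mulHeight₁ x ^ (1 + ε)⁻¹ := by
        refine Real.rpow_le_rpow_of_exponent_le (one_le_mulHeight₁ x) ?_
        rw [← one_div, le_div_iff₀ (by positivity)]
        nlinarith
    _ ≤ (K * (supportRad (X * (X - 1)) x : ℝ) ^ (1 + ε)) ^ (1 + ε)⁻¹ := by gcongr
    _ = K ^ (1 + ε)⁻¹ * supportRad (X * (X - 1)) x := by
        rw [Real.mul_rpow hK.le (by positivity), Real.rpow_rpow_inv (by positivity) (by positivity)]

lemma prod_X_sub_C_dvd {K : Type*} [Field K] {S : Finset K} {f : K[X]} (h : ∀ s ∈ S, f.IsRoot s) :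
    ∏ s ∈ S, (X - C s) ∣ f :=
  Finset.prod_dvd_of_coprime (fun _ _ _ _ hst ↦ pairwise_coprime_X_sub_C Function.injective_id hst)
    fun s hs ↦ dvd_iff_isRoot.mpr (h s hs)

lemma exists_lt_lt_of_two_lt_card {α : Type*} [LinearOrder α] {S : Finset α} (hS : 2 < S.card) :
    ∃ a ∈ S, ∃ b ∈ S, ∃ c ∈ S, a < b ∧ b < c := by
  let e := S.orderEmbOfFin rfl
  exact ⟨e ⟨0, by lia⟩, S.orderEmbOfFin_mem rfl _, e ⟨1, by lia⟩, S.orderEmbOfFin_mem rfl _,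
    e ⟨2, hS⟩, S.orderEmbOfFin_mem rfl _, e.lt_iff_lt.mpr (by simp), e.lt_iff_lt.mpr (by simp)⟩

lemma exists_succ_mul_eq_succ_mul {x y : ℚ} (hx : 0 < x) (hy : 0 < y) :
    ∃ a b : ℕ, ((a : ℚ) + 1) * y = ((b : ℚ) + 1) * x := by
  have hnum : 0 < (x / y).num := Rat.num_pos.mpr (div_pos hx hy)
  obtain ⟨a, ha⟩ : ∃ a : ℕ, (a : ℤ) + 1 = (x / y).num := ⟨((x / y).num - 1).toNat, by lia⟩
  obtain ⟨b, hb⟩ := Nat.exists_eq_succ_of_ne_zero (x / y).den_nz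
  refine ⟨a, b, ?_⟩
  calc ((a : ℚ) + 1) * y = (x / y).num * y := by rw [← ha]; norm_cast
    _ = (x / y).den * (x / y) * y := by rw [Rat.den_mul_eq_num]
    _ = (b + 1) * x := by rw [mul_assoc, div_mul_cancel₀ _ hy.ne', hb, Nat.cast_succ]

lemma derivative_X_sub_C_pow_mul_X_sub_C_pow {R : Type*} [CommRing R] {r s t : R} {a b : ℕ}
    (h : ((a : R) + 1) * (t - s) = (b + 1) * (s - r)) :
    derivative ((X - C r) ^ (a + 1) * (X - C t) ^ (b + 1)) =
      (X - C r) ^ a * (X - C t) ^ b * (C ((a : R) + 1 + (b + 1)) * (X - C s)) := by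
  have hC := congrArg C h
  simp only [C_mul, C_add, C_sub, C_1] at hC
  simp only [derivative_mul, derivative_X_sub_C_pow, Nat.add_sub_cancel, Nat.cast_add,
    Nat.cast_one, C_add, C_1]
  linear_combination (-(X - C r) ^ a * (X - C t) ^ b) * hC

lemma RadBound.of_prod_image {φ : ℚ[X]} {S : Finset ℚ} {i : ℕ}
    (H : RadBound (∏ t ∈ S.image φ.eval, (X - C t))) (hφ : 0 < φ.natDegree)
    (hcrit : derivative φ ∣ (∏ s ∈ S, (X - C s)) ^ i) : RadBound (∏ s ∈ S, (X - C s)) := by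
  set g := ∏ t ∈ S.image φ.eval, (X - C t)
  have hg : g ≠ 0 := Finset.prod_ne_zero_iff.mpr fun t _ ↦ X_sub_C_ne_zero t
  have hdvd : ∏ s ∈ S, (X - C s) ∣ g.comp φ := prod_X_sub_C_dvd fun s hs ↦ by
    rw [IsRoot, eval_comp, eval_prod]
    exact Finset.prod_eq_zero (Finset.mem_image_of_mem _ hs) (by simp)
  refine (H.comp hg hφ (hcrit.trans (pow_dvd_pow_of_dvd hdvd i))).of_dvd_pow (k := 1)
    (comp_ne_zero_of_natDegree_pos hg hφ) ?_
  rwa [pow_one]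

lemma radBound_prod_X_sub_C_of_card_eq_two (habc : ABCConjecture) {S : Finset ℚ}
    (hS : S.card = 2) : RadBound (∏ s ∈ S, (X - C s)) := by
  obtain ⟨a, b, hab, rfl⟩ := Finset.card_eq_two.mp hS
  have hba : b - a ≠ 0 := sub_ne_zero.mpr hab.symm
  let φ : ℚ[X] := C (b - a)⁻¹ * (X - C a)
  have hφ : φ.natDegree = 1 := by
    rw [natDegree_C_mul (inv_ne_zero hba), natDegree_X_sub_C]
  have himage : ({a, b} : Finset ℚ).image φ.eval = {0, 1} := by simp [φ, hba]
  refine RadBound.of_prod_image (φ := φ) (i := 0) ?_ (by lia) (IsUnit.dvd (by simpa [φ] using hba))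
  rw [himage, Finset.prod_pair zero_ne_one, C_0, C_1, sub_zero]
  exact radBound_X_mul_X_sub_one habc

lemma exists_card_image_eval_lt {S : Finset ℚ} (hS : 2 < S.card) :
    ∃ (φ : ℚ[X]) (i : ℕ), 0 < φ.natDegree ∧ derivative φ ∣ (∏ s ∈ S, (X - C s)) ^ i ∧
      (S.image φ.eval).card < S.card := by
  obtain ⟨r, hr, s, hs, t, ht, hrs, hst⟩ := exists_lt_lt_of_two_lt_card hS
  obtain ⟨a, b, hab⟩ := exists_succ_mul_eq_succ_mul (sub_pos.mpr hrs) (sub_pos.mpr hst)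
  refine ⟨(X - C r) ^ (a + 1) * (X - C t) ^ (b + 1), a + b + 1, ?_, ?_, ?_⟩
  · rw [natDegree_mul (pow_ne_zero _ (X_sub_C_ne_zero _)) (pow_ne_zero _ (X_sub_C_ne_zero _)),
      natDegree_pow, natDegree_X_sub_C]
    lia
  · have hunit : IsUnit (C ((a : ℚ) + 1 + (b + 1))) :=
      isUnit_C.mpr (by positivity : (a : ℚ) + 1 + (b + 1) ≠ 0).isUnit
    have hdvd {x : ℚ} (hx : x ∈ S) : X - C x ∣ ∏ s ∈ S, (X - C s) :=
      Finset.dvd_prod_of_mem (fun s ↦ X - C s) hx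
    rw [derivative_X_sub_C_pow_mul_X_sub_C_pow hab, pow_succ, pow_add]
    exact mul_dvd_mul (mul_dvd_mul (pow_dvd_pow_of_dvd (hdvd hr) a)
      (pow_dvd_pow_of_dvd (hdvd ht) b)) (hunit.mul_left_dvd.mpr (hdvd hs))
  · refine Finset.card_image_le.lt_of_ne fun h ↦ (hrs.trans hst).ne ?_
    exact Finset.card_image_iff.mp h hr ht (by simp)

lemma radBound_prod_X_sub_C (habc : ABCConjecture) (S : Finset ℚ) :
    RadBound (∏ s ∈ S, (X - C s)) := by
  induction hn : S.card using Nat.strong_induction_on generalizing S with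
  | _ n ih =>
  subst hn
  obtain hS | hS | hS : S.card ≤ 1 ∨ S.card = 2 ∨ 2 < S.card := by lia
  · refine .of_natDegree_radical_le_one (natDegree_radical_le.trans ?_)
    rwa [natDegree_finsetProd_X_sub_C_eq_card]
  · exact radBound_prod_X_sub_C_of_card_eq_two habc hS
  · obtain ⟨φ, i, hφ, hcrit, hcard⟩ := exists_card_image_eval_lt hS
    exact (ih _ hcard _ rfl).of_prod_image hφ hcrit

lemma exists_irreducible_dvd_comp {K : Type*} [Field K] {q : K[X]} (hq : Irreducible q)
    (φ : K[X]) : ∃ r : K[X], Irreducible r ∧ r.natDegree ≤ q.natDegree ∧ q ∣ r.comp φ := by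
  have : Fact (Irreducible q) := ⟨hq⟩
  have : FiniteDimensional K (AdjoinRoot q) := (AdjoinRoot.powerBasis hq.ne_zero).finite
  let β : AdjoinRoot q := aeval (AdjoinRoot.root q) φ
  refine ⟨minpoly K β, minpoly.irreducible (IsIntegral.of_finite K β), ?_, ?_⟩
  · rw [← AdjoinRoot.powerBasis_dim hq.ne_zero, ← PowerBasis.finrank]
    exact minpoly.natDegree_le β
  · rw [← AdjoinRoot.mk_eq_zero, ← AdjoinRoot.aeval_eq, aeval_comp]
    exact minpoly.aeval K β

section Weight

variable {K : Type*} [Field K] [DecidableEq K]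

/-- The complexity decreasing along the reduction to rational points: each irreducible factor of
degree `m` contributes `m! - 1`, so that linear factors count zero and one factor of degree `n ≥ 2`
outweighs any polynomial of degree `n - 1`. -/
noncomputable def weight (f : K[X]) : ℕ :=
  ((normalizedFactors f).map fun p ↦ p.natDegree.factorial - 1).sum

lemma weight_mul {f g : K[X]} (hf : f ≠ 0) (hg : g ≠ 0) : weight (f * g) = weight f + weight g := by
  simp [weight, normalizedFactors_mul hf hg]

lemma weight_of_irreducible {p : K[X]} (hp : Irreducible p) :
    weight p = p.natDegree.factorial - 1 := by
  simp [weight, normalizedFactors_irreducible hp, natDegree_eq_of_degree_eq degree_normalize]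

lemma weight_of_isUnit {u : K[X]} (hu : IsUnit u) : weight u = 0 := by
  simp [weight, normalizedFactors_of_isUnit hu]

lemma weight_le_natDegree_mul {m : ℕ} {f : K[X]} (hf : f ≠ 0) (hm : f.natDegree ≤ m) :
    weight f ≤ f.natDegree * (m.factorial - 1) := by
  induction f using UniqueFactorizationMonoid.induction_on_prime with
  | h₁ => exact absurd rfl hf
  | h₂ u hu => simp [weight_of_isUnit hu]
  | h₃ a p ha hp ih =>
    rw [natDegree_mul hp.ne_zero ha] at hm ⊢
    rw [weight_mul hp.ne_zero ha, weight_of_irreducible hp.irreducible, add_mul]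
    gcongr
    · exact (Nat.sub_le_sub_right (Nat.factorial_le (by lia)) 1).trans
        (Nat.le_mul_of_pos_left _ hp.irreducible.natDegree_pos)
    · exact ih ha (by lia)

lemma weight_derivative_lt [CharZero K] {p : K[X]} (hp : Irreducible p) (h : 2 ≤ p.natDegree) :
    weight (derivative p) < weight p := by
  obtain ⟨k, hk⟩ : ∃ k, p.natDegree = k + 2 := ⟨p.natDegree - 2, by lia⟩
  have hdeg : (derivative p).natDegree = k + 1 := by rw [natDegree_derivative, hk]; rfl
  have hp' : derivative p ≠ 0 := ne_zero_of_natDegree_gt (n := 0) (by lia)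
  calc weight (derivative p) ≤ (k + 1) * ((k + 1).factorial - 1) :=
        (weight_le_natDegree_mul hp' hdeg.le).trans_eq (by rw [hdeg])
    _ < (k + 2) * (k + 1).factorial - 1 := by
        obtain ⟨t, ht⟩ := Nat.exists_eq_succ_of_ne_zero (k + 1).factorial_ne_zero
        rw [ht, Nat.succ_sub_one, Nat.lt_sub_iff_add_lt]
        nlinarith
    _ = weight p := by rw [weight_of_irreducible hp, hk, Nat.factorial_succ (k + 1)]

lemma exists_weight_le_dvd_comp (φ : K[X]) {f : K[X]} (hf : f ≠ 0) :
    ∃ g : K[X], g ≠ 0 ∧ weight g ≤ weight f ∧ f ∣ g.comp φ := by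
  induction f using UniqueFactorizationMonoid.induction_on_prime with
  | h₁ => exact absurd rfl hf
  | h₂ u hu => exact ⟨1, one_ne_zero, by simp [weight_of_isUnit isUnit_one], hu.dvd⟩
  | h₃ a p ha hp ih =>
    obtain ⟨g, hg, hwg, hag⟩ := ih ha
    obtain ⟨r, hr, hdeg, hpr⟩ := exists_irreducible_dvd_comp hp.irreducible φ
    refine ⟨r * g, mul_ne_zero hr.ne_zero hg, ?_, mul_comp r g φ ▸ mul_dvd_mul hpr hag⟩
    rw [weight_mul hr.ne_zero hg, weight_mul hp.ne_zero ha, weight_of_irreducible hr,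
      weight_of_irreducible hp.irreducible]
    exact add_le_add (Nat.sub_le_sub_right (Nat.factorial_le hdeg) 1) hwg

lemma exists_weight_lt_dvd_comp [CharZero K] {p q : K[X]} (hp : Irreducible p)
    (hdeg : 2 ≤ p.natDegree) (hq : q ≠ 0) :
    ∃ g : K[X], g ≠ 0 ∧ weight g < weight (p * q) ∧ derivative p ∣ g.comp p ∧
      p * q ∣ g.comp p := by
  have hp' : derivative p ≠ 0 := fun h ↦ by
    have := derivative_eq_zero.mp h
    lia
  obtain ⟨g₁, hg₁, hw₁, hqg⟩ := exists_weight_le_dvd_comp p hq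
  obtain ⟨g₂, hg₂, hw₂, hpg⟩ := exists_weight_le_dvd_comp p hp'
  have hcomp : (X * (g₁ * g₂)).comp p = p * (g₁.comp p * g₂.comp p) := by simp
  refine ⟨X * (g₁ * g₂), mul_ne_zero X_ne_zero (mul_ne_zero hg₁ hg₂), ?_, ?_, ?_⟩
  · have hX : weight (X : K[X]) = 0 := by simp [weight_of_irreducible irreducible_X]
    rw [weight_mul X_ne_zero (mul_ne_zero hg₁ hg₂), weight_mul hg₁ hg₂, hX,
      weight_mul hp.ne_zero hq]
    have := weight_derivative_lt hp hdeg
    lia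
  · exact hcomp ▸ (hpg.mul_left _).mul_left _
  · exact hcomp ▸ mul_dvd_mul_left _ (hqg.mul_right _)

end Weight

lemma dvd_prod_roots_pow_of_splits {K : Type*} [Field K] [DecidableEq K] {f : K[X]}
    (hf : f.Splits) (hf0 : f ≠ 0) :
    f ∣ (∏ s ∈ f.roots.toFinset, (X - C s)) ^ f.roots.card := by
  nth_rw 1 [hf.eq_prod_roots]
  rw [(isUnit_C.mpr (leadingCoeff_ne_zero.mpr hf0).isUnit).mul_left_dvd,
    ← Multiset.prod_replicate, ← Multiset.map_const']
  exact Multiset.prod_dvd_prod_of_dvd _ _ fun s hs ↦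
    Finset.dvd_prod_of_mem (fun s ↦ X - C s) (Multiset.mem_toFinset.mpr hs)

lemma exists_irreducible_dvd_of_not_splits {K : Type*} [Field K] {f : K[X]} (hf : ¬ f.Splits) :
    ∃ p : K[X], Irreducible p ∧ p ∣ f ∧ 2 ≤ p.natDegree := by
  by_contra! h
  have hf0 : f ≠ 0 := fun h0 ↦ hf (h0 ▸ Splits.zero)
  obtain ⟨u, hu⟩ := factors_prod hf0
  refine hf (hu ▸ (Splits.multisetProd fun p hp ↦ Splits.of_natDegree_le_one ?_).mul
    u.isUnit.splits)
  have := h p (irreducible_of_factor p hp) (dvd_of_mem_factors hp)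
  lia

lemma radBound_of_ne_zero (habc : ABCConjecture) {f : ℚ[X]} (hf : f ≠ 0) : RadBound f := by
  induction hn : weight f using Nat.strong_induction_on generalizing f with
  | _ n ih =>
  subst hn
  by_cases hsplits : f.Splits
  · exact (radBound_prod_X_sub_C habc _).of_dvd_pow
      (Finset.prod_ne_zero_iff.mpr fun s _ ↦ X_sub_C_ne_zero s)
      (dvd_prod_roots_pow_of_splits hsplits hf)
  · obtain ⟨p, hp, ⟨q, rfl⟩, hdeg⟩ := exists_irreducible_dvd_of_not_splits hsplits
    obtain ⟨g, hg, hw, hcrit, hdvd⟩ :=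
      exists_weight_lt_dvd_comp hp hdeg (right_ne_zero_of_mul hf)
    have hpos : 0 < p.natDegree := by lia
    have hcomp : RadBound (g.comp p) := (ih _ hw hg rfl).comp (i := 1) hg hpos (by rwa [pow_one])
    exact hcomp.of_dvd_pow (k := 1) (comp_ne_zero_of_natDegree_pos hg hpos) (by rwa [pow_one])

lemma natDegree_radical_of_squarefree {K : Type*} [Field K] [DecidableEq K] {f : K[X]}
    (hf : Squarefree f) : (radical f).natDegree = f.natDegree :=
  natDegree_radical_le.antisymm <| natDegree_le_of_dvd
    ((dvd_radical_iff hf.isRadical hf.ne_zero).mpr dvd_rfl) radical_ne_zero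

section Gauss

variable {R K : Type*} [CommRing R] [IsDomain R] [NormalizedGCDMonoid R] [Field K] [Algebra R K]
  [IsFractionRing R K]

lemma exists_isPrimitive_associated_map {q : K[X]} (hq : q ≠ 0) :
    ∃ p : R[X], p.IsPrimitive ∧ Associated (p.map (algebraMap R K)) q := by
  have associated_smul {r : R} (hr : r ≠ 0) (f : K[X]) : Associated f (r • f) := by
    rw [← algebraMap_smul K r f, smul_eq_C_mul]
    refine associated_unit_mul_right _ _ (isUnit_C.mpr (IsUnit.mk0 _ ?_))
    exact (map_ne_zero_iff _ (FaithfulSMul.algebraMap_injective R K)).mpr hr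
  obtain ⟨b, hb, hbq⟩ := IsLocalization.integerNormalization_spec (nonZeroDivisors R) q
  set P := IsLocalization.integerNormalization (nonZeroDivisors R) q
  have hP : P.content ≠ 0 := by
    rwa [Ne, content_eq_zero_iff, IsLocalization.integerNormalization_eq_zero_iff le_rfl]
  refine ⟨P.primPart, P.isPrimitive_primPart, (associated_smul hP _).trans ?_⟩
  have hmap : P.content • P.primPart.map (algebraMap R K) = b • q := by
    rw [← hbq]
    nth_rw 3 [P.eq_C_content_mul_primPart]
    rw [Polynomial.map_mul, map_C, ← smul_eq_C_mul, algebraMap_smul]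
  rw [hmap]
  exact (associated_smul (nonZeroDivisors.ne_zero hb) q).symm

lemma squarefree_map_algebraMap {f : R[X]} (hf : Squarefree f) :
    Squarefree (f.map (algebraMap R K)) := by
  intro q hqq
  have hinj := FaithfulSMul.algebraMap_injective R K
  have hq : q ≠ 0 := by
    rintro rfl
    rw [mul_zero, zero_dvd_iff, Polynomial.map_eq_zero_iff hinj] at hqq
    exact hf.ne_zero hqq
  obtain ⟨p, hp, hpq⟩ := exists_isPrimitive_associated_map (R := R) hq
  have hpp : p * p ∣ f := (hp.mul hp).dvd_of_fraction_map_dvd_fraction_map (K := K) <| by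
    rw [Polynomial.map_mul]
    exact (hpq.mul_mul hpq).dvd.trans hqq
  exact hpq.isUnit ((hf p hpp).map (mapRingHom (algebraMap R K)))

end Gauss

section Dehomogenize

variable {R : Type*} [CommRing R]

/-- The polynomial `F(X, 1)` attached to the binary form `F(U, V)`. -/
noncomputable def dehomogenize (F : MvPolynomial (Fin 2) R) : R[X] :=
  MvPolynomial.aeval ![X, 1] F

variable {F : MvPolynomial (Fin 2) R} {d : ℕ}

lemma homogenize_dehomogenize (hF : F.IsHomogeneous d) : (dehomogenize F).homogenize d = F :=
  homogenize_eq_of_isHomogeneous hF rfl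

lemma natDegree_dehomogenize_le (hF : F.IsHomogeneous d) : (dehomogenize F).natDegree ≤ d := by
  rw [dehomogenize, F.as_sum]
  simp only [MvPolynomial.aeval_sum, MvPolynomial.aeval_monomial, ← C_eq_algebraMap]
  refine natDegree_sum_le_of_forall_le _ _ fun m hm ↦ ?_
  have hdeg : m 0 + m 1 = d := by
    simpa [Finsupp.weight_apply, Finsupp.sum_fintype] using
      hF (by simpa using hm : MvPolynomial.coeff m F ≠ 0)
  calc _ ≤ (X ^ m 0 : R[X]).natDegree := by
        simpa [Finsupp.prod_fintype] using natDegree_C_mul_le (MvPolynomial.coeff m F) (X ^ m 0)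
    _ ≤ m 0 := natDegree_X_pow_le _
    _ ≤ d := by lia

lemma homogenize_natDegree_dehomogenize_mul_pow (hF : F.IsHomogeneous d) :
    (dehomogenize F).homogenize (dehomogenize F).natDegree *
      MvPolynomial.X 1 ^ (d - (dehomogenize F).natDegree) = F := by
  rw [← homogenize_one, ← homogenize_mul _ _ le_rfl (by simp), mul_one,
    Nat.add_sub_cancel' (natDegree_dehomogenize_le hF), homogenize_dehomogenize hF]

lemma le_natDegree_dehomogenize_add_one [Nontrivial R] (hF : F.IsHomogeneous d)
    (hsq : Squarefree F) : d ≤ (dehomogenize F).natDegree + 1 := by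
  by_contra! hlt
  have hdvd : MvPolynomial.X 1 * MvPolynomial.X 1 ∣ F := by
    rw [← homogenize_natDegree_dehomogenize_mul_pow hF, ← pow_two]
    exact (pow_dvd_pow _ (by lia)).mul_left _
  simpa using (hsq _ hdvd).map (MvPolynomial.eval (0 : Fin 2 → R))

lemma squarefree_dehomogenize [IsDomain R] (hF : F.IsHomogeneous d) (hsq : Squarefree F) :
    Squarefree (dehomogenize F) := by
  intro q hqq
  have hq : q ≠ 0 := by
    rintro rfl
    rw [mul_zero, zero_dvd_iff] at hqq
    refine hsq.ne_zero ?_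
    rw [← homogenize_dehomogenize hF, hqq, homogenize_zero]
  have hdvd : q.homogenize q.natDegree * q.homogenize q.natDegree ∣ F := by
    rw [← homogenize_mul _ _ le_rfl le_rfl, ← natDegree_mul hq hq,
      ← homogenize_natDegree_dehomogenize_mul_pow hF]
    exact (homogenize_dvd hqq).mul_right _
  simpa [aeval_homogenize_X_one q le_rfl] using
    (hsq _ hdvd).map (MvPolynomial.aeval (![X, 1] : Fin 2 → R[X]))

lemma eval_map_dehomogenize {K : Type*} [Field K] (φ : R →+* K) (hF : F.IsHomogeneous d) (u : R)
    {v : R} (hv : φ v ≠ 0) :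
    ((dehomogenize F).map φ).eval (φ u / φ v) = φ (MvPolynomial.eval ![u, v] F) / φ v ^ d := by
  have heval := eval_homogenize (natDegree_map_le.trans (natDegree_dehomogenize_le hF))
    ![φ u, φ v] hv (p := (dehomogenize F).map φ)
  rw [homogenize_map, homogenize_dehomogenize hF, MvPolynomial.eval_map] at heval
  have hvec : ![φ u, φ v] = φ ∘ ![u, v] := by
    ext i
    fin_cases i <;> rfl
  rw [eq_div_iff (pow_ne_zero d hv), MvPolynomial.eval₂_comp, ← hvec]
  exact heval.symm

end Dehomogenize

section CoprimePair

variable {u v : ℤ}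

lemma mulHeight₁_div_of_isCoprime (h : IsCoprime u v) :
    mulHeight₁ ((u : ℚ) / v) = ((max |u| |v| : ℤ) : ℝ) := by
  have hgcd : Finset.univ.gcd ![u, v] = 1 := by
    simpa [Finset.univ_fin2, ← Int.coe_gcd, ← Int.abs_eq_normalize, Int.gcd_eq_natAbs] using
      Int.isCoprime_iff_gcd_eq_one.mp h.abs_right
  have hmax : ⨆ i, |![u, v] i| = max |u| |v| := by
    refine le_antisymm (ciSup_le fun i ↦ ?_) (max_le ?_ ?_)
    · fin_cases i <;> simp
    · exact Finite.le_ciSup (fun i ↦ |![u, v] i|) 0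
    · exact Finite.le_ciSup (fun i ↦ |![u, v] i|) 1
  have hvec : ![(u : ℚ), v] = Int.cast ∘ ![u, v] := by
    ext i
    fin_cases i <;> rfl
  rw [mulHeight₁_div_eq_mulHeight, hvec, Rat.mulHeight_eq_max_abs_of_gcd_eq_one hgcd, hmax]

lemma supportRad_dehomogenize_div_le {F : MvPolynomial (Fin 2) ℤ} {d : ℕ}
    (hF : F.IsHomogeneous d) (hv : v ≠ 0) (hN : MvPolynomial.eval ![u, v] F ≠ 0) :
    supportRad ((dehomogenize F).map (Int.castRingHom ℚ)) (u / v) ≤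
      v.natAbs ^ ((dehomogenize F).natDegree + 1 - d) *
        radical (MvPolynomial.eval ![u, v] F).natAbs := by
  have hden : ((u / v : ℚ).den : ℤ) ∣ v := by
    simpa only [Rat.divInt_eq_div] using Rat.den_dvd u v
  have hnum : (((dehomogenize F).map (Int.castRingHom ℚ)).eval (u / v : ℚ)).num ∣
      MvPolynomial.eval ![u, v] F := by
    have heval := eval_map_dehomogenize (Int.castRingHom ℚ) hF u (v := v) (by simpa using hv)
    simp only [eq_intCast] at heval
    rw [heval]
    simpa only [Rat.divInt_eq_div, Int.cast_pow] using
      Rat.num_dvd (MvPolynomial.eval ![u, v] F) (pow_ne_zero d hv)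
  refine radical_le_mul_radical (pow_ne_zero _ (Int.natAbs_ne_zero.mpr hv))
    (Int.natAbs_ne_zero.mpr hN) fun p hp h ↦ ?_
  rcases hp.dvd_mul.mp h with h | h
  · have hpv : p ∣ v.natAbs := h.trans (Int.natCast_dvd.mp hden)
    rcases le_or_gt d (dehomogenize F).natDegree with hd | hd
    · exact (dvd_pow hpv (by lia)).mul_right _
    · have hvN : v ∣ MvPolynomial.eval ![u, v] F := by
        rw [← homogenize_natDegree_dehomogenize_mul_pow hF, map_mul, map_pow, MvPolynomial.eval_X]
        exact (dvd_pow_self v (by lia)).mul_left _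
      exact (hpv.trans (Int.natAbs_dvd_natAbs.mpr hvN)).mul_left _
  · exact (h.trans (Int.natAbs_dvd_natAbs.mpr hnum)).mul_left _

end CoprimePair

lemma exists_mul_rpow_le_radical_eval (habc : ABCConjecture) {F : MvPolynomial (Fin 2) ℤ} {d : ℕ}
    (hF : F.IsHomogeneous d) (hsq : Squarefree F) {ε : ℝ} (hε : 0 < ε) :
    ∃ c : ℝ, 0 < c ∧ ∀ u v : ℤ, IsCoprime u v → v ≠ 0 → MvPolynomial.eval ![u, v] F ≠ 0 →
      c * ((max |u| |v| : ℤ) : ℝ) ^ ((d : ℝ) - 2 - ε) ≤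
        radical (MvPolynomial.eval ![u, v] F).natAbs := by
  set n := (dehomogenize F).natDegree with hn
  have hdn : d ≤ n + 1 := le_natDegree_dehomogenize_add_one hF hsq
  have hg := squarefree_map_algebraMap (K := ℚ) (squarefree_dehomogenize hF hsq)
  obtain ⟨c, hc, hbound⟩ := radBound_of_ne_zero habc hg.ne_zero ε hε
  rw [natDegree_radical_of_squarefree hg,
    natDegree_map_eq_of_injective (FaithfulSMul.algebraMap_injective ℤ ℚ), ← hn] at hbound
  refine ⟨c, hc, fun u v huv hv hN ↦ ?_⟩
  set H : ℝ := ((max |u| |v| : ℤ) : ℝ) with hH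
  have hvH : (v.natAbs : ℝ) ≤ H := by
    rw [Nat.cast_natAbs]
    exact Int.cast_le.mpr (le_max_right |u| |v|)
  have hH0 : 0 < H := lt_of_lt_of_le (by simpa using hv) hvH
  have hgx : ((dehomogenize F).map (algebraMap ℤ ℚ)).eval ((u : ℚ) / v) ≠ 0 := by
    have heval := eval_map_dehomogenize (algebraMap ℤ ℚ) hF u (v := v) (by simpa using hv)
    simp only [eq_intCast] at heval
    rw [heval]
    simp [hN, hv]
  have key : c * H ^ ((d : ℝ) - 2 - ε) * H ^ (n + 1 - d) ≤
      radical (MvPolynomial.eval ![u, v] F).natAbs * H ^ (n + 1 - d) := by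
    calc c * H ^ ((d : ℝ) - 2 - ε) * H ^ (n + 1 - d)
      _ = c * mulHeight₁ ((u : ℚ) / v) ^ ((n : ℝ) - 1 - ε) := by
        rw [mulHeight₁_div_of_isCoprime huv, ← hH, mul_assoc, ← Real.rpow_natCast,
          ← Real.rpow_add hH0, Nat.cast_sub hdn]
        push_cast
        ring_nf
      _ ≤ supportRad ((dehomogenize F).map (algebraMap ℤ ℚ)) (u / v) := hbound _ hgx
      _ ≤ v.natAbs ^ (n + 1 - d) * radical (MvPolynomial.eval ![u, v] F).natAbs := by
        exact_mod_cast supportRad_dehomogenize_div_le hF hv hN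
      _ ≤ radical (MvPolynomial.eval ![u, v] F).natAbs * H ^ (n + 1 - d) := by
        rw [mul_comm]
        gcongr
  exact le_of_mul_le_mul_right key (by positivity)

theorem stmt15 (habc : ABCConjecture) (F : MvPolynomial (Fin 2) ℤ) (d : ℕ)
    (hF : F ≠ 0) (hhom : F.IsHomogeneous d) (hsq : Squarefree F) :
    ∀ ε : ℝ, 0 < ε → ∃ c : ℝ, 0 < c ∧
      ∀ u v : ℤ, IsCoprime u v → MvPolynomial.eval ![u, v] F ≠ 0 →
        c * ((max |u| |v| : ℤ) : ℝ) ^ ((d : ℝ) - 2 - ε) ≤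
          (radNat (MvPolynomial.eval ![u, v] F).natAbs : ℝ) := by
  intro ε hε
  obtain ⟨c, hc, hbound⟩ := exists_mul_rpow_le_radical_eval habc hhom hsq hε
  refine ⟨min c 1, lt_min hc one_pos, fun u v huv hN ↦ ?_⟩
  rw [radNat_eq_radical]
  rcases eq_or_ne v 0 with rfl | hv
  · have hmax : max |u| |(0 : ℤ)| = 1 := by
      simp [Int.isUnit_iff_abs_eq.mp (isCoprime_zero_right.mp huv)]
    rw [hmax, Int.cast_one, Real.one_rpow, mul_one]
    exact (min_le_right c 1).trans (mod_cast Nat.one_le_iff_ne_zero.mpr radical_ne_zero)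
  · refine le_trans ?_ (hbound u v huv hv hN)
    gcongr
    exact min_le_left c 1
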